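/- Weak bound on the forcing term with the constant c(W): let d ≥ 1 and let W, a, b : ℤ^d → ℂ satisfy ∑_l |W(l)| |l| < ∞, ∑_l |W(l)| |l|^{3/2} < ∞, ∑_k |k| |a(k)|² < ∞, ∑_k |k| |b(k)|² < ∞, and suppose a(0) = 0. Set c(W) := (2π)^{−d/2}(∑_l |W(l)| |l| + ∑_l |W(l)| |l|^{3/2}). Then (2π)^{−d/2} |∑_{l∈ℤ^d} ∑_{k∈ℤ^d} W(l) a(−l−k) b(k) (l·k)| ≤ c(W) (∑_k |k| |a(k)|²)^{1/2} (∑_k |k| |b(k)|²)^{1/2}. (Equivalently, |∫_{𝕋^d} u ∇V·∇v dx| ≤ c(V) ‖(−Δ)^{1/4}u‖ ‖(−Δ)^{1/4}v‖ for zero-mean u.) -/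

import Mathlib

/-!
Write `m = -l - k`. Since `|k| ≤ |l| + |m|`, we have `|k|^{1/2} ≤ |l|^{1/2} + |m|^{1/2}`, and since
a nonzero lattice point has norm at least `1`, for `m ≠ 0` this is at most
`(1 + |l|^{1/2}) |m|^{1/2}`. Together with `|l·k| ≤ |l| |k|` and `a 0 = 0` it gives
`|W(l) a(m) b(k) (l·k)| ≤ |W(l)| (|l| + |l|^{3/2}) (|m|^{1/2} |a(m)|) (|k|^{1/2} |b(k)|)`
(`norm_term_le`). For fixed `l`, Cauchy–Schwarz in `k` and the bijection `k ↦ -l - k` bound the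
inner sum by `|W(l)| (|l| + |l|^{3/2})` times the two square roots; summing over `l` gives `c(W)`.
-/

open scoped BigOperators

/-- Euclidean norm of a lattice point `k ∈ ℤ^d`. -/
noncomputable def znorm {d : ℕ} (k : Fin d → ℤ) : ℝ :=
  Real.sqrt (∑ i, ((k i : ℝ)) ^ 2)

/-- Dot product `l · k` of lattice points, as a complex number. -/
def zdot {d : ℕ} (l k : Fin d → ℤ) : ℂ :=
  ((∑ i, l i * k i : ℤ) : ℂ)

/-- The constant `c(W) = (2π)^{−d/2} (∑ |W l||l| + ∑ |W l||l|^{3/2})`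
arising from the potential. -/
noncomputable def cW {d : ℕ} (W : (Fin d → ℤ) → ℂ) : ℝ :=
  (2 * Real.pi) ^ (-(d : ℝ) / 2) *
    ((∑' l, ‖W l‖ * znorm l) + ∑' l, ‖W l‖ * znorm l ^ ((3 : ℝ) / 2))

lemma znorm_eq_norm {d : ℕ} (k : Fin d → ℤ) :
    znorm k = ‖(WithLp.toLp 2 (fun i => (k i : ℝ)) : EuclideanSpace ℝ (Fin d))‖ := by
  simp [znorm, EuclideanSpace.norm_eq]

lemma znorm_nonneg {d : ℕ} (k : Fin d → ℤ) : 0 ≤ znorm k := Real.sqrt_nonneg _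

lemma znorm_le_add {d : ℕ} (l k : Fin d → ℤ) : znorm k ≤ znorm l + znorm (-l - k) := by
  have h : (WithLp.toLp 2 (fun i => (k i : ℝ)) : EuclideanSpace ℝ (Fin d)) =
      -(WithLp.toLp 2 (fun i => (l i : ℝ)) +
        WithLp.toLp 2 (fun i => (((-l - k) i : ℤ) : ℝ))) := by
    ext i
    simp
  rw [znorm_eq_norm, znorm_eq_norm, znorm_eq_norm, h, norm_neg]
  exact norm_add_le _ _

lemma one_le_znorm {d : ℕ} {k : Fin d → ℤ} (hk : k ≠ 0) : 1 ≤ znorm k := by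
  obtain ⟨i, hi⟩ := Function.ne_iff.mp hk
  have h1 : (1 : ℝ) ≤ (k i : ℝ) ^ 2 := by
    have : (1 : ℤ) ≤ (k i) ^ 2 := sq_pos_of_ne_zero hi
    exact_mod_cast this
  refine Real.one_le_sqrt.mpr (h1.trans ?_)
  exact Finset.single_le_sum (f := fun i => (k i : ℝ) ^ 2) (fun j _ => sq_nonneg _)
    (Finset.mem_univ i)

lemma norm_zdot_le {d : ℕ} (l k : Fin d → ℤ) : ‖zdot l k‖ ≤ znorm l * znorm k := by
  have h := abs_real_inner_le_norm
    (WithLp.toLp 2 (fun i => (l i : ℝ)) : EuclideanSpace ℝ (Fin d))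
    (WithLp.toLp 2 (fun i => (k i : ℝ)))
  rw [← znorm_eq_norm, ← znorm_eq_norm] at h
  refine le_trans (le_of_eq ?_) h
  rw [zdot, Complex.norm_intCast]
  congr 1
  simp [PiLp.inner_apply, mul_comm]

/-- Half of the derivative falling on `b` is shifted to `a` and `W`; the case `-l - k = 0`
is harmless because `a 0 = 0`. -/
lemma norm_term_le {d : ℕ} (W a b : (Fin d → ℤ) → ℂ) (ha0 : a 0 = 0) (l k : Fin d → ℤ) :
    ‖W l * a (-l - k) * b k * zdot l k‖ ≤
      (‖W l‖ * znorm l + ‖W l‖ * znorm l ^ ((3 : ℝ) / 2)) *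
        ((√(znorm (-l - k)) * ‖a (-l - k)‖) * (√(znorm k) * ‖b k‖)) := by
  have hpow : znorm l ^ ((3 : ℝ) / 2) = znorm l * √(znorm l) := by
    rw [Real.sqrt_eq_rpow, show (3 : ℝ) / 2 = 1 + 1 / 2 by norm_num,
      Real.rpow_add_of_nonneg (znorm_nonneg l) (by norm_num) (by norm_num), Real.rpow_one]
  rw [hpow]
  by_cases hm : -l - k = 0
  · simp [hm, ha0]
  have hk : √(znorm k) ≤ (1 + √(znorm l)) * √(znorm (-l - k)) := by
    have h1 : 1 ≤ √(znorm (-l - k)) := Real.one_le_sqrt.mpr (one_le_znorm hm)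
    have h2 : √(znorm k) ≤ √(znorm l) + √(znorm (-l - k)) :=
      (Real.sqrt_le_sqrt (znorm_le_add l k)).trans
        (Real.sqrt_le_iff.mpr ⟨by positivity, by
          nlinarith [Real.sq_sqrt (znorm_nonneg l), Real.sq_sqrt (znorm_nonneg (-l - k)),
            mul_nonneg (Real.sqrt_nonneg (znorm l)) (Real.sqrt_nonneg (znorm (-l - k)))]⟩)
    nlinarith [Real.sqrt_nonneg (znorm l)]
  have hl := znorm_nonneg l
  have hk2 := Real.mul_self_sqrt (znorm_nonneg k)
  calc ‖W l * a (-l - k) * b k * zdot l k‖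
      = ‖W l‖ * ‖a (-l - k)‖ * ‖b k‖ * ‖zdot l k‖ := by simp only [norm_mul]
    _ ≤ ‖W l‖ * ‖a (-l - k)‖ * ‖b k‖ * (znorm l * znorm k) := by
        gcongr
        exact norm_zdot_le l k
    _ = ‖W l‖ * ‖a (-l - k)‖ * ‖b k‖ * znorm l * √(znorm k) * √(znorm k) := by
        nth_rewrite 1 [← hk2]
        ring
    _ ≤ ‖W l‖ * ‖a (-l - k)‖ * ‖b k‖ * znorm l * √(znorm k) *
          ((1 + √(znorm l)) * √(znorm (-l - k))) := by gcongr
    _ = _ := by ring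

/-- Cauchy–Schwarz for sums over an arbitrary index type, with summability of the products. -/
lemma summable_mul_and_tsum_mul_le {ι : Type*} {f g : ι → ℝ} (hf0 : ∀ i, 0 ≤ f i)
    (hg0 : ∀ i, 0 ≤ g i) (hf : Summable fun i => f i ^ 2) (hg : Summable fun i => g i ^ 2) :
    (Summable fun i => f i * g i) ∧
      ∑' i, f i * g i ≤ √(∑' i, f i ^ 2) * √(∑' i, g i ^ 2) := by
  have hs : Summable fun i => f i * g i :=
    Summable.of_nonneg_of_le (fun i => mul_nonneg (hf0 i) (hg0 i))
      (fun i => by nlinarith [sq_nonneg (f i - g i), sq_nonneg (f i), sq_nonneg (g i)])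
      (hf.add hg)
  refine ⟨hs, hs.tsum_le_of_sum_le fun s => ?_⟩
  refine (Real.sum_mul_le_sqrt_mul_sqrt s f g).trans ?_
  gcongr
  · exact hf.sum_le_tsum s fun i _ => sq_nonneg _
  · exact hg.sum_le_tsum s fun i _ => sq_nonneg _

/-- **Weak bound on the forcing term with the constant `c(W)`.**
For `W, a, b` with `∑ |W l||l| < ∞`, `∑ |W l||l|^{3/2} < ∞`, `∑ |k||a k|² < ∞`,
`∑ |k||b k|² < ∞` and `a 0 = 0`, one has
`(2π)^{−d/2} |∑_l ∑_k W(l) a(−l−k) b(k) (l·k)| ≤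
  c(W) (∑ |k||a k|²)^{1/2} (∑ |k||b k|²)^{1/2}`;
equivalently `|∫ u ∇V·∇v| ≤ c(V) ‖(−Δ)^{1/4}u‖ ‖(−Δ)^{1/4}v‖` for zero-mean `u`. -/
theorem weak_bound_forcing_term_cW (d : ℕ) (hd : 1 ≤ d) (W a b : (Fin d → ℤ) → ℂ)
    (hW1 : Summable fun l => ‖W l‖ * znorm l)
    (hW2 : Summable fun l => ‖W l‖ * znorm l ^ ((3 : ℝ) / 2))
    (ha : Summable fun k => znorm k * ‖a k‖ ^ 2)
    (hb : Summable fun k => znorm k * ‖b k‖ ^ 2)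
    (ha0 : a 0 = 0) :
    (2 * Real.pi) ^ (-(d : ℝ) / 2) * ‖∑' l, ∑' k, W l * a (-l - k) * b k * zdot l k‖ ≤
      cW W * Real.sqrt (∑' k, znorm k * ‖a k‖ ^ 2) *
        Real.sqrt (∑' k, znorm k * ‖b k‖ ^ 2) := by
  have hsq : ∀ (c : (Fin d → ℤ) → ℂ) (k : Fin d → ℤ),
      (√(znorm k) * ‖c k‖) ^ 2 = znorm k * ‖c k‖ ^ 2 := fun c k => by
    rw [mul_pow, Real.sq_sqrt (znorm_nonneg k)]
  set A := √(∑' k, znorm k * ‖a k‖ ^ 2) with hA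
  set B := √(∑' k, znorm k * ‖b k‖ ^ 2) with hB
  have inner : ∀ l, ‖∑' k, W l * a (-l - k) * b k * zdot l k‖ ≤
      (‖W l‖ * znorm l + ‖W l‖ * znorm l ^ ((3 : ℝ) / 2)) * (A * B) := by
    intro l
    have hc0 : 0 ≤ ‖W l‖ * znorm l + ‖W l‖ * znorm l ^ ((3 : ℝ) / 2) := by
      have := znorm_nonneg l
      positivity
    -- `k ↦ -l - k` is a bijection of the lattice, so the shifted sequence has the same sum.
    have hal : Summable fun k => znorm (-l - k) * ‖a (-l - k)‖ ^ 2 :=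
      (Equiv.subLeft (-l)).summable_iff.mpr ha
    have hAl : ∑' k, znorm (-l - k) * ‖a (-l - k)‖ ^ 2 = ∑' k, znorm k * ‖a k‖ ^ 2 :=
      (Equiv.subLeft (-l)).tsum_eq fun k => znorm k * ‖a k‖ ^ 2
    obtain ⟨hs, hle⟩ := summable_mul_and_tsum_mul_le
      (f := fun k => √(znorm (-l - k)) * ‖a (-l - k)‖) (g := fun k => √(znorm k) * ‖b k‖)
      (fun k => by positivity) (fun k => by positivity)
      (by simpa only [hsq] using hal) (by simpa only [hsq] using hb)
    simp only [hsq] at hle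
    rw [hAl, ← hA, ← hB] at hle
    exact (tsum_of_norm_bounded (hs.hasSum.mul_left _)
      (norm_term_le W a b ha0 l)).trans (mul_le_mul_of_nonneg_left hle hc0)
  have hsum := tsum_of_norm_bounded ((hW1.hasSum.add hW2.hasSum).mul_right (A * B)) inner
  rw [cW, mul_assoc, mul_assoc]
  exact mul_le_mul_of_nonneg_left hsum (by positivity)
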